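/- Suppose 𝕡 is the chain pomset on [s] (the total order 1 ≺ 2 ≺ … ≺ s) and all blocks have the same dimension, k_1 = k_2 = … = k_s = t. Let K be such that t divides ⌈log_m K⌉. Then for every ideal I of 𝕡, every I-perfect (n, K, d) (𝕡,π)-code 𝒞 ⊆ ℤ_m^n is an MDS (𝕡,π)-code. -/

import Mathlib

open scoped Classical

noncomputable section

/-- Lee weight of an element of `ZMod m`. -/
def leeWt (m : ℕ) (a : ZMod m) : ℕ := min a.val (m - a.val)

/-- Block Lee weight of the `i`-th block of `u`. -/
def blockWt (m s : ℕ) (π : Fin s → ℕ) (u : ∀ i : Fin s, Fin (π i) → ZMod m)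
    (i : Fin s) : ℕ :=
  Finset.univ.sup fun t => leeWt m (u i t)

/-- The `(𝕡,π)`-weight of `u`. -/
def pomsetWt (m s : ℕ) (P : PartialOrder (Fin s)) (π : Fin s → ℕ)
    (u : ∀ i : Fin s, Fin (π i) → ZMod m) : ℕ :=
  ∑ i : Fin s,
    if ∃ j, j ≠ i ∧ P.le i j ∧ 0 < blockWt m s π u j then m / 2
    else blockWt m s π u i

/-- The pomset block distance. -/
def pomsetDist (m s : ℕ) (P : PartialOrder (Fin s)) (π : Fin s → ℕ)
    (u v : ∀ i : Fin s, Fin (π i) → ZMod m) : ℕ :=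
  pomsetWt m s P π (u - v)

/-- An ideal of the pomset `𝕡`, given by its count function `I : [s] → {0,…,⌊m/2⌋}`. -/
def IsIdeal (m s : ℕ) (P : PartialOrder (Fin s)) (I : Fin s → ℕ) : Prop :=
  (∀ a, I a ≤ m / 2) ∧ ∀ a b, 0 < I a → P.le b a → b ≠ a → I b = m / 2

/-- An ideal has full count if every element of its root set has count `⌊m/2⌋`. -/
def FullCount (m : ℕ) {s : ℕ} (I : Fin s → ℕ) : Prop :=
  ∀ a, 0 < I a → I a = m / 2

/-- The cardinality `|I|` of an ideal. -/
def idealCard {s : ℕ} (I : Fin s → ℕ) : ℕ := ∑ a, I a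

/-- The cardinality `|I*|` of the root set of an ideal. -/
def rootCard {s : ℕ} (I : Fin s → ℕ) : ℕ :=
  (Finset.univ.filter fun a => 0 < I a).card

/-- `Σ_{i ∈ I*} k_i`. -/
def rootSum {s : ℕ} (π I : Fin s → ℕ) : ℕ :=
  ∑ a ∈ Finset.univ.filter (fun a => 0 < I a), π a

/-- The `I`-ball centered at `u`. -/
def ballI (m s : ℕ) (π : Fin s → ℕ) (I : Fin s → ℕ)
    (u : ∀ i : Fin s, Fin (π i) → ZMod m) :
    Set (∀ i : Fin s, Fin (π i) → ZMod m) :=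
  {v | ∀ i, blockWt m s π (u - v) i ≤ I i}

/-- `𝒞` is `I`-perfect: the `I`-balls centered at codewords are pairwise
disjoint and cover the whole space. -/
def IPerfect (m s : ℕ) (π : Fin s → ℕ) (I : Fin s → ℕ)
    (C : Set (∀ i : Fin s, Fin (π i) → ZMod m)) : Prop :=
  (C.Pairwise fun c c' => Disjoint (ballI m s π I c) (ballI m s π I c')) ∧
  (⋃ c ∈ C, ballI m s π I c) = Set.univ

/-- The `r`-ball centered at `u`. -/
def ballR (m s : ℕ) (P : PartialOrder (Fin s)) (π : Fin s → ℕ) (r : ℕ)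
    (u : ∀ i : Fin s, Fin (π i) → ZMod m) :
    Set (∀ i : Fin s, Fin (π i) → ZMod m) :=
  {v | pomsetDist m s P π u v ≤ r}

/-- The standard dot product on `ℤ_m^n`. -/
def dotProd (m s : ℕ) (π : Fin s → ℕ)
    (c v : ∀ i : Fin s, Fin (π i) → ZMod m) : ZMod m :=
  ∑ i, ∑ t, c i t * v i t

/-- The dual code `𝒞^⊥`. -/
def dualCode (m s : ℕ) (π : Fin s → ℕ)
    (C : Set (∀ i : Fin s, Fin (π i) → ZMod m)) :
    Set (∀ i : Fin s, Fin (π i) → ZMod m) :=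
  {v | ∀ c ∈ C, dotProd m s π c v = 0}

/-- The dual pomset, encoded by the opposite partial order. -/
def dualOrder (s : ℕ) (P : PartialOrder (Fin s)) : PartialOrder (Fin s) where
  le a b := P.le b a
  lt a b := P.lt b a
  le_refl a := P.le_refl a
  le_trans a b c h1 h2 := P.le_trans _ _ _ h2 h1
  lt_iff_le_not_ge a b := P.lt_iff_le_not_ge b a
  le_antisymm a b h1 h2 := (P.le_antisymm _ _ h1 h2).symm

/-- The minimum `(𝕡,π)`-distance of a code. -/
def minDist (m s : ℕ) (P : PartialOrder (Fin s)) (π : Fin s → ℕ)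
    (C : Set (∀ i : Fin s, Fin (π i) → ZMod m)) : ℕ :=
  sInf {r | ∃ c ∈ C, ∃ c' ∈ C, c ≠ c' ∧ r = pomsetWt m s P π (c - c')}

/-- `𝒞` is an MDS `(𝕡,π)`-code: it attains the Singleton bound
`n − ⌈log_m K⌉ ≥ max { Σ_{i∈I*} k_i : I ideal, |I*| = ⌊(d−1)/⌊m/2⌋⌋ }`. -/
def IsMDS (m s : ℕ) (P : PartialOrder (Fin s)) (π : Fin s → ℕ)
    (C : Set (∀ i : Fin s, Fin (π i) → ZMod m)) : Prop :=
  (∀ I, IsIdeal m s P I →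
      rootCard I = (minDist m s P π C - 1) / (m / 2) →
      rootSum π I ≤ (∑ i, π i) - Nat.clog m (Nat.card ↥C)) ∧
  (∃ I, IsIdeal m s P I ∧
      rootCard I = (minDist m s P π C - 1) / (m / 2) ∧
      rootSum π I = (∑ i, π i) - Nat.clog m (Nat.card ↥C))

/-- The chain pomset on `[s]`: the usual total order on `Fin s`. -/
def chainOrder (s : ℕ) : PartialOrder (Fin s) := inferInstance

theorem leeWt_le (m : ℕ) (a : ZMod m) : leeWt m a ≤ m / 2 := by
  unfold leeWt; omega

theorem leeWt_eq_zero {m : ℕ} [NeZero m] {a : ZMod m} (h : leeWt m a = 0) : a = 0 := by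
  have := ZMod.val_lt a
  unfold leeWt at h
  exact (ZMod.val_eq_zero a).1 (by omega)

theorem leeWt_zero (m : ℕ) [NeZero m] : leeWt m 0 = 0 := by simp [leeWt]

theorem leeWt_half (m : ℕ) (hm : 4 ≤ m) : leeWt m (((m / 2 : ℕ)) : ZMod m) = m / 2 := by
  unfold leeWt
  rw [ZMod.val_natCast, Nat.mod_eq_of_lt (by omega)]
  omega

theorem leeWt_neg {m : ℕ} [NeZero m] (a : ZMod m) : leeWt m (-a) = leeWt m a := by
  unfold leeWt
  have := ZMod.val_lt a
  rw [ZMod.neg_val]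
  split_ifs with h
  · simp [h]
  · omega

theorem blockWt_le (m s : ℕ) (π : Fin s → ℕ) (u : ∀ i : Fin s, Fin (π i) → ZMod m)
    (i : Fin s) : blockWt m s π u i ≤ m / 2 :=
  Finset.sup_le fun _ _ => leeWt_le m _

theorem blockWt_eq_zero {m s : ℕ} [NeZero m] {π : Fin s → ℕ}
    {u : ∀ i : Fin s, Fin (π i) → ZMod m} {i : Fin s} :
    blockWt m s π u i = 0 ↔ u i = 0 := by
  unfold blockWt
  rw [← Nat.bot_eq_zero, Finset.sup_eq_bot_iff]
  constructor
  · intro h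
    funext x
    exact leeWt_eq_zero (h x (Finset.mem_univ x))
  · intro h x _
    rw [h]
    exact leeWt_zero m

theorem key (m s : ℕ) (hm : 4 ≤ m) (t : ℕ) (ht0 : 0 < t)
    (I : Fin s → ℕ) (hI : IsIdeal m s (chainOrder s) I)
    (C : Set (∀ _ : Fin s, Fin t → ZMod m))
    (hdiv : t ∣ Nat.clog m (Nat.card C)) (hK2 : 2 ≤ Nat.card C)
    (d : ℕ) (hd : IsLeast {r | ∃ c ∈ C, ∃ c' ∈ C, c ≠ c' ∧
      r = pomsetWt m s (chainOrder s) (fun _ => t) (c - c')} d)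
    (hperf : IPerfect m s (fun _ => t) I C) :
    ∃ j : Fin s, Nat.clog m (Nat.card C) = (s - j) * t ∧ (d - 1) / (m / 2) = j := by
  have : NeZero m := ⟨by omega⟩
  obtain ⟨hdis, hcov⟩ := hperf
  have hself : ∀ c, c ∈ ballI m s (fun _ => t) I c := by
    intro c i
    have : blockWt m s (fun _ => t) (c - c) i = 0 := by
      rw [blockWt_eq_zero]; simp
    omega
  -- two codewords with one in the ball of the other are equal
  have hsep : ∀ c ∈ C, ∀ c' ∈ C, (∀ i, I i = m / 2 ∨ c i = c' i) → c = c' := by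
    intro c hc c' hc' h
    by_contra hne
    refine (Set.disjoint_left.1 (hdis hc hc' hne) : ∀ ⦃a⦄, a ∈ _ → a ∉ _) (?_ : c' ∈ _) (hself c')
    intro i
    rcases h i with h | h
    · rw [h]; exact blockWt_le _ _ _ _ _
    · have : blockWt m s (fun _ => t) (c - c') i = 0 := by
        rw [blockWt_eq_zero]; simp [h]
      omega
  have hcov' : ∀ v, ∃ c ∈ C, v ∈ ballI m s (fun _ => t) I c := by
    intro v
    have : v ∈ ⋃ c ∈ C, ballI m s (fun _ => t) I c := by rw [hcov]; trivial
    simpa using this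
  have hfin : Finite C := Nat.finite_of_card_ne_zero (by omega)
  have hne : ∃ c ∈ C, ∃ c' ∈ C, c ≠ c' := by
    obtain ⟨r, hr⟩ := hd.1
    obtain ⟨hc, c', hc', h, _⟩ := hr
    exact ⟨_, hc, c', hc', h⟩
  have hex : ∃ a, I a ≠ m / 2 := by
    by_contra! h
    obtain ⟨c, hc, c', hc', hn⟩ := hne
    exact hn (hsep c hc c' hc' fun i => Or.inl (h i))
  obtain ⟨j, hj, hjmin⟩ : ∃ j, I j ≠ m / 2 ∧ ∀ i, i < j → I i = m / 2 := by
    obtain ⟨j, hj, hmin⟩ := WellFounded.has_min (wellFounded_lt (α := Fin s)) {a | I a ≠ m / 2} hex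
    exact ⟨j, hj, fun i hi => by
      by_contra h
      exact hmin i h hi⟩
  have hjgt : ∀ i, j < i → I i = 0 := by
    intro i hi
    by_contra h
    exact hj (hI.2 i j (by omega) hi.le hi.ne)
  have hjlt : I j < m / 2 := lt_of_le_of_ne (hI.1 j) hj
  have hzero : ∀ c v, v ∈ ballI m s (fun _ => t) I c → ∀ i, j < i → c i = v i := by
    intro c v h i hi
    have h1 := h i
    rw [hjgt i hi, Nat.le_zero, blockWt_eq_zero] at h1
    exact sub_eq_zero.1 h1
  -- two distinct codewords agreeing beyond j
  obtain ⟨a, ha, b, hb, hab, hab0⟩ : ∃ a ∈ C, ∃ b ∈ C, a ≠ b ∧ ∀ i, j < i → a i = b i := by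
    obtain ⟨a, ha, _⟩ := hcov' 0
    let v : ∀ _ : Fin s, Fin t → ZMod m :=
      Function.update a j (a j - fun _ => ((m / 2 : ℕ) : ZMod m))
    obtain ⟨b, hb, hbv⟩ := hcov' v
    refine ⟨a, ha, b, hb, ?_, ?_⟩
    · rintro rfl
      have h1 := hbv j
      have h2 : leeWt m ((a - v) j ⟨0, ht0⟩) ≤ blockWt m s (fun _ => t) (a - v) j :=
        Finset.le_sup (f := fun x => leeWt m ((a - v) j x)) (Finset.mem_univ _)
      have h3 : (a - v) j ⟨0, ht0⟩ = ((m / 2 : ℕ) : ZMod m) := by simp [v]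
      rw [h3, leeWt_half m hm] at h2
      omega
    · intro i hi
      rw [hzero b v hbv i hi]
      simp [v, hi.ne']
  have hjs := j.2
  refine ⟨j, ?_, ?_⟩
  · -- upper bound
    have hup : Nat.card C ≤ m ^ ((s - j) * t) := by
      let p : C → ({i : Fin s // i ∈ Finset.Ici j} → Fin t → ZMod m) := fun c i => c.1 i.1
      have hp : Function.Injective p := by
        intro c c' h
        apply Subtype.ext
        apply hsep _ c.2 _ c'.2
        intro i
        by_cases hi : i < j
        · exact Or.inl (hjmin i hi)
        · exact Or.inr (congrFun h ⟨i, by simpa using hi⟩)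
      have := Nat.card_le_card_of_injective p hp
      rw [Nat.card_eq_fintype_card (α := _ → _)] at this
      simp only [Fintype.card_fun, ZMod.card, Fintype.card_fin, Fintype.card_coe, Fin.card_Ici] at this
      rwa [← pow_mul, mul_comm t] at this
    have hlow : m ^ ((s - 1 - j) * t) < Nat.card C := by
      let p : C → ({i : Fin s // i ∈ Finset.Ioi j} → Fin t → ZMod m) := fun c i => c.1 i.1
      have hp : Function.Surjective p := by
        intro w
        obtain ⟨c, hc, h⟩ := hcov' fun i => if hi : i ∈ Finset.Ioi j then w ⟨i, hi⟩ else 0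
        refine ⟨⟨c, hc⟩, ?_⟩
        funext i
        have := hzero _ _ h i.1 (Finset.mem_Ioi.1 i.2)
        change c i.1 = _
        rw [this, dif_pos i.2]
      have hni : ¬ Function.Injective p := by
        intro h
        have : p ⟨a, ha⟩ = p ⟨b, hb⟩ := by
          funext i
          exact hab0 i.1 (Finset.mem_Ioi.1 i.2)
        exact hab (congrArg Subtype.val (h this))
      have hle := Nat.card_le_card_of_surjective p hp
      have hne : Nat.card C ≠ Nat.card ({i : Fin s // i ∈ Finset.Ioi j} → Fin t → ZMod m) := by
        intro h
        exact hni (((Nat.bijective_iff_surjective_and_card p).2 ⟨hp, h⟩).1)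
      have := lt_of_le_of_ne hle hne.symm
      rw [Nat.card_eq_fintype_card (α := _ → _)] at this
      simp only [Fintype.card_fun, ZMod.card, Fintype.card_fin, Fintype.card_coe, Fin.card_Ioi] at this
      rwa [← pow_mul, mul_comm t] at this
    have h1 : Nat.clog m (Nat.card C) ≤ (s - j) * t := Nat.clog_le_of_le_pow hup
    have h2 : (s - 1 - j) * t < Nat.clog m (Nat.card C) := (Nat.lt_clog_iff_pow_lt (by omega)).2 hlow
    obtain ⟨q, hq⟩ := hdiv
    rw [hq, mul_comm t] at h1 h2 ⊢
    have h3 := Nat.le_of_mul_le_mul_right h1 ht0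
    have h4 := Nat.lt_of_mul_lt_mul_right h2
    congr 1
    omega
  · have hlo : j * (m / 2) + 1 ≤ d := by
      obtain ⟨c, hc, c', hc', hcc, rfl⟩ := hd.1
      obtain ⟨i, hi, hci⟩ : ∃ i, j ≤ i ∧ c i ≠ c' i := by
        by_contra! h
        refine hcc (hsep c hc c' hc' fun i => ?_)
        rcases lt_or_ge i j with hi | hi
        · exact Or.inl (hjmin i hi)
        · exact Or.inr (h i hi)
      have hpos : 0 < blockWt m s (fun _ => t) (c - c') i := by
        rw [Nat.pos_iff_ne_zero, Ne, blockWt_eq_zero]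
        exact sub_ne_zero.2 hci
      unfold pomsetWt
      have hmem : i ∉ Finset.Iio j := by simpa using hi
      refine le_trans ?_ (Finset.sum_le_sum_of_subset (Finset.subset_univ (insert i (Finset.Iio j))))
      rw [Finset.sum_insert hmem, add_comm]
      apply add_le_add
      · split_ifs
        · omega
        · exact hpos
      · rw [Finset.sum_congr rfl (g := fun _ => m / 2)]
        · simp
        · intro x hx
          have hx : x < j := by simpa using hx
          exact if_pos ⟨i, (lt_of_lt_of_le hx hi).ne', (lt_of_lt_of_le hx hi).le, hpos⟩
    have hhi : d ≤ (j + 1) * (m / 2) := by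
      refine (hd.2 ⟨a, ha, b, hb, hab, rfl⟩).trans ?_
      have hz : ∀ i, j < i → blockWt m s (fun _ => t) (a - b) i = 0 := by
        intro i hi
        rw [blockWt_eq_zero]
        exact sub_eq_zero.2 (hab0 i hi)
      unfold pomsetWt
      rw [← Finset.sum_subset (Finset.subset_univ (Finset.Iic j))]
      · refine (Finset.sum_le_card_nsmul _ _ (m / 2) ?_).trans ?_
        · intro x _
          split_ifs
          · exact le_rfl
          · exact blockWt_le _ _ _ _ _
        · simp
      · intro x _ hx
        have hx : j < x := by simpa using hx
        rw [if_neg, hz x hx]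
        rintro ⟨y, _, hxy, hy⟩
        have hxy : x ≤ y := hxy
        rw [hz y (lt_of_lt_of_le hx hxy)] at hy
        exact lt_irrefl _ hy
    have hl : 0 < m / 2 := by omega
    apply le_antisymm
    · apply Nat.lt_succ_iff.1
      rw [Nat.div_lt_iff_lt_mul hl]
      change _ < (j.1 + 1) * (m / 2)
      omega
    · rw [Nat.le_div_iff_mul_le hl]
      omega

/-- for the chain pomset with equal block dimensions and `t ∣ ⌈log_m K⌉`,
every `I`-perfect `(n,K,d)` code is MDS. -/
theorem chain_I_perfect_implies_mds
    (m s : ℕ) (hm : 4 ≤ m) (hs : 1 ≤ s)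
    (π : Fin s → ℕ) (hπ : ∀ i, 0 < π i)
    (t : ℕ) (ht : ∀ i, π i = t)
    (n K d : ℕ) (hn : n = ∑ i, π i)
    (hdiv : t ∣ Nat.clog m K)
    (I : Fin s → ℕ) (hI : IsIdeal m s (chainOrder s) I)
    (C : Set (∀ i : Fin s, Fin (π i) → ZMod m))
    (hK : Nat.card ↥C = K) (hK2 : 2 ≤ K)
    (hd : IsLeast {r | ∃ c ∈ C, ∃ c' ∈ C, c ≠ c' ∧
      r = pomsetWt m s (chainOrder s) π (c - c')} d)
    (hperf : IPerfect m s π I C) :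
    IsMDS m s (chainOrder s) π C := by
  obtain rfl : π = fun _ => t := funext ht
  subst hK
  have ht0 : 0 < t := hπ ⟨0, hs⟩
  obtain ⟨j, hj1, hj2⟩ := key m s hm t ht0 I hI C hdiv hK2 d hd hperf
  have hmd : minDist m s (chainOrder s) (fun _ => t) C = d := hd.csInf_eq
  have hjs := j.2
  have hr : (∑ _i : Fin s, t) - Nat.clog m (Nat.card C) = j * t := by
    rw [hj1]
    simp only [Finset.sum_const, Finset.card_univ, Fintype.card_fin, smul_eq_mul]
    rw [← Nat.sub_mul]
    congr 1
    omega
  have hrs : ∀ J : Fin s → ℕ, rootSum (fun _ => t) J = rootCard J * t := by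
    intro J
    simp [rootSum, rootCard]
  refine ⟨?_, fun i => if i < j then m / 2 else 0, ⟨?_, ?_⟩, ?_⟩
  · intro J _ hJ
    rw [hrs, hJ, hmd, hj2, hr]
  · intro x
    dsimp only
    split_ifs <;> omega
  · intro x y hx hyx _
    have hyx : y ≤ x := hyx
    have hxj : x < j := by
      by_contra h
      simp [h] at hx
    exact if_pos (lt_of_le_of_lt hyx hxj)
  · have hc : rootCard (fun i : Fin s => if i < j then m / 2 else 0) = j := by
      unfold rootCard
      have : (Finset.univ.filter fun x : Fin s => 0 < if x < j then m / 2 else 0)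
          = Finset.Iio j := by
        ext x
        simp only [Finset.mem_filter, Finset.mem_univ, true_and, Finset.mem_Iio]
        split_ifs with h
        · simp only [h, iff_true]; omega
        · simp [h]
      rw [this, Fin.card_Iio]
    exact ⟨by rw [hc, hmd, hj2], by rw [hrs, hc, hr]⟩

end
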